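/- Let p be a prime, R an integral domain of characteristic p, and set H := X − X^p ∈ R[X]. Let f ∈ R[X] be a polynomial not divisible by H, and let N ∈ ℤ. Then H divides H·f′ + N·f (with N acting through the canonical map ℤ → R) if and only if p divides N. -/

import Mathlib

open Polynomial

theorem dvd_intCast_mul_iff_of_not_dvd {A : Type*} [Ring A] {p : ℕ} [CharP A p] (hp : p.Prime)
    {h f : A} (hf : ¬h ∣ f) (n : ℤ) : h ∣ n * f ↔ (p : ℤ) ∣ n := by
  constructor
  · intro h_dvd
    by_contra p_not_dvd
    have n_isUnit : IsUnit (n : A) := (CharP.isUnit_intCast_iff hp).mpr p_not_dvd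
    rw [(Int.cast_commute n f).eq, n_isUnit.dvd_mul_right] at h_dvd
    exact hf h_dvd
  · intro p_dvd
    rw [(CharP.intCast_eq_zero_iff A p n).mpr p_dvd, zero_mul]
    exact dvd_zero h

theorem stmt_4_general {R : Type*} [Ring R] {p : ℕ} [CharP R p] (hp : p.Prime)
    {H f : R[X]} (hf : ¬H ∣ f) (N : ℤ) :
    H ∣ H * derivative f + (N : R) • f ↔ (p : ℤ) ∣ N := by
  rw [dvd_add_right (dvd_mul_right H _), Int.cast_smul_eq_zsmul, zsmul_eq_mul]
  exact dvd_intCast_mul_iff_of_not_dvd hp hf N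

/-- Let `p` be a prime, `R` an integral domain of characteristic `p`, and `H := X − X^p`.
Let `f ∈ R[X]` be a polynomial not divisible by `H`, and `N : ℤ`.  Then
`H ∣ H·f′ + N·f` (with `N` acting through `ℤ → R`) if and only if `p ∣ N`. -/
theorem stmt_4 (p : ℕ) (hp : p.Prime) (R : Type*) [CommRing R] [IsDomain R] [CharP R p]
    (f : R[X]) (hf : ¬ (X - X ^ p ∣ f)) (N : ℤ) :
    (X - X ^ p) ∣ ((X - X ^ p) * derivative f + (N : R) • f) ↔ (p : ℤ) ∣ N :=
  stmt_4_general hp hf N
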